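/- arXiv:1107.1074 — 2 statements merged into one kernel-verified Lean document; each statement's English description precedes it below -/
import Mathlib

section
/- If d ≥ 3, then for all x, y ∈ ℤ^d with x ≠ 0, y ≠ 0 and x ≠ y, the Green's function satisfies the strict inequality G_0(0, x) + G_0(x, y) < G_0(0, 0) + G_0(0, y); equivalently, ρ_d(x) + ρ_d(y - x) > ρ_d(y) (so that the constant C_d(x, y) := 2γ_d (ρ_d(y-x) + ρ_d(x) - ρ_d(y)) / (a(d-2)(G_0(0,0) + G_0(0,y))²) is strictly positive). -/
open MeasureTheory Real Filter Topology Asymptotics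

/-- Fourier symbol `φ(θ) = ∑_z a(z) cos⟨z,θ⟩` of the random walk on `ℤ^d`. -/
noncomputable def phiSymb (d : ℕ) (a : (Fin d → ℤ) → ℝ) (θ : Fin d → ℝ) : ℝ :=
  ∑' z : Fin d → ℤ, a z * Real.cos (∑ i, (z i : ℝ) * θ i)

/-- Transition probability `p(t;x,y) = (2π)^{-d} ∫_{[-π,π]^d} e^{φ(θ)t} cos⟨θ,y-x⟩ dθ`. -/
noncomputable def ptrans (d : ℕ) (a : (Fin d → ℤ) → ℝ) (t : ℝ) (x y : Fin d → ℤ) : ℝ :=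
  ((2 * π) ^ d)⁻¹ *
    ∫ θ in Set.Icc (fun _ : Fin d => -π) (fun _ : Fin d => π),
      Real.exp (phiSymb d a θ * t) * Real.cos (∑ i, θ i * ((y i : ℝ) - (x i : ℝ)))

/-- Laplace transform `G_λ(x,y) = ∫_0^∞ e^{-λt} p(t;x,y) dt` (Green's function at `λ = 0`). -/
noncomputable def Glam (d : ℕ) (a : (Fin d → ℤ) → ℝ) (lam : ℝ) (x y : Fin d → ℤ) : ℝ :=
  ∫ t in Set.Ioi (0 : ℝ), Real.exp (-lam * t) * ptrans d a t x y

/-- Hessian matrix `φ''(0)`, with entries `-∑_z a(z) z_i z_j`. -/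
noncomputable def hessPhi (d : ℕ) (a : (Fin d → ℤ) → ℝ) : Matrix (Fin d) (Fin d) ℝ :=
  Matrix.of fun i j => -∑' z : Fin d → ℤ, a z * (z i : ℝ) * (z j : ℝ)

/-- `γ_d = (2π)^{-d/2} |det φ''(0)|^{-1/2}`. -/
noncomputable def gammaConst (d : ℕ) (a : (Fin d → ℤ) → ℝ) : ℝ :=
  ((2 * π) ^ ((d : ℝ) / 2))⁻¹ * (Real.sqrt |(hessPhi d a).det|)⁻¹

/-- `ρ_d(x) = (a/(2π)^d) ∫_{[-π,π]^d} (cos⟨x,θ⟩ - 1)/φ(θ) dθ` for `x ≠ 0`, and `ρ_d(0) = 1`. -/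
noncomputable def rhoConst (d : ℕ) (a : (Fin d → ℤ) → ℝ) (x : Fin d → ℤ) : ℝ :=
  if x = 0 then 1 else
    (-(a 0) / (2 * π) ^ d) *
      ∫ θ in Set.Icc (fun _ : Fin d => -π) (fun _ : Fin d => π),
        (Real.cos (∑ i, (x i : ℝ) * θ i) - 1) / phiSymb d a θ

/-- `γ̃_d(z) = (1/(2(2π)^d)) ∫_{ℝ^d} ⟨v,z⟩² e^{⟨φ''(0)v,v⟩/2} dv`. -/
noncomputable def gammaTilde (d : ℕ) (a : (Fin d → ℤ) → ℝ) (z : Fin d → ℤ) : ℝ :=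
  (2 * (2 * π) ^ d)⁻¹ *
    ∫ v : Fin d → ℝ, (∑ i, v i * (z i : ℝ)) ^ 2 *
      Real.exp ((∑ i, (hessPhi d a).mulVec v i * v i) / 2)

/-!
Write `g z = G_0(0, z)`. It vanishes at infinity (Riemann–Lebesgue) and is a fundamental solution:
the generator sends it to minus the point mass at the origin. The function
`g 0 * g z - g x * g (z - x)` of `z` therefore vanishes at `x` and at infinity and is
superharmonic off `x`, so by the minimum principle `g x * g (y - x) ≤ g 0 * g y`. Since `g 0` is the
strict maximum of `g`, also `0 < (g 0 - g x) * (g 0 - g (y - x))`. Adding the two and dividing by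
`g 0` gives `g x + g (y - x) < g 0 + g y`. The constants `ρ_d` are the differences `g 0 - g` up to
the factor `a = -a(0)`, and `γ_d > 0` because `-φ''(0)` is positive definite by irreducibility.
-/

section Frequency

variable {ι : Type*} [Fintype ι]

/-- The pairing `⟨z, θ⟩ = ∑ i, z i * θ i` of a lattice point with a frequency, bundled as a
homomorphism from the lattice to the dual of the frequency space. -/
noncomputable def latPair : (ι → ℤ) →+ StrongDual ℝ (ι → ℝ) where
  toFun z := ∑ i, (z i : ℝ) • ContinuousLinearMap.proj i
  map_zero' := by simp
  map_add' z w := by simp [add_smul, Finset.sum_add_distrib]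

lemma latPair_apply (z : ι → ℤ) (θ : ι → ℝ) : latPair z θ = ∑ i, (z i : ℝ) * θ i := by
  simp [latPair]

lemma latPair_single [DecidableEq ι] (i : ι) (θ : ι → ℝ) :
    latPair (Pi.single i 1) θ = θ i := by
  simp [latPair_apply, Pi.single_apply]

lemma norm_le_norm_latPair (z : ι → ℤ) : ‖z‖ ≤ ‖latPair z‖ := by
  classical
  refine (pi_norm_le_iff_of_nonneg (norm_nonneg _)).2 fun i => ?_
  calc ‖z i‖ = ‖latPair z (Pi.single i 1)‖ := by
        simp [latPair_apply, Pi.single_apply, Int.norm_eq_abs]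
    _ ≤ ‖latPair z‖ * ‖(Pi.single i 1 : ι → ℝ)‖ := (latPair z).le_opNorm _
    _ = ‖latPair z‖ := by simp [Pi.norm_single]

lemma tendsto_latPair_cocompact :
    Tendsto (latPair (ι := ι)) cofinite (cocompact (StrongDual ℝ (ι → ℝ))) := by
  rw [← Metric.cobounded_eq_cocompact, ← tendsto_norm_atTop_iff_cobounded,
    ← cocompact_eq_cofinite]
  exact tendsto_atTop_mono norm_le_norm_latPair tendsto_norm_cocompact_atTop

lemma re_fourierChar_smul_ofReal (t r : ℝ) :
    (Real.fourierChar (-((2 * π)⁻¹ * t)) • (r : ℂ)).re = cos t * r := by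
  rw [Circle.smul_def, Real.fourierChar_apply, smul_eq_mul, Complex.re_mul_ofReal,
    Complex.exp_ofReal_mul_I_re, mul_neg, mul_inv_cancel_left₀ (by positivity), cos_neg]

lemma tendsto_integral_cos_latPair_mul {f : (ι → ℝ) → ℝ} (hf : Integrable f) :
    Tendsto (fun z : ι → ℤ => ∫ θ, cos (latPair z θ) * f θ) cofinite (𝓝 0) := by
  have hscale : Tendsto (fun z : ι → ℤ => (2 * π)⁻¹ • latPair z) cofinite
      (cocompact (StrongDual ℝ (ι → ℝ))) :=
    (Homeomorph.smulOfNeZero (2 * π)⁻¹ (by positivity)).isClosedEmbedding.tendsto_cocompact.comp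
      tendsto_latPair_cocompact
  have hlim := (Complex.continuous_re.tendsto 0).comp <|
    (tendsto_integral_exp_smul_cocompact (fun θ => (f θ : ℂ)) volume).comp hscale
  rw [Complex.zero_re] at hlim
  refine hlim.congr fun z => ?_
  have hint := (Real.fourierIntegral_convergent_iff' (μ := volume) (f := fun θ => (f θ : ℂ))
    (ContinuousLinearMap.apply ℝ ℝ) ((2 * π)⁻¹ • latPair z)).2 hf.ofReal
  refine (integral_re hint).symm.trans (integral_congr_ae (.of_forall fun θ => ?_))
  exact re_fourierChar_smul_ofReal (latPair z θ) (f θ)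

variable (ι) in
/-- The cube `[-π, π]^ι`, a fundamental domain for the dual torus of the lattice `ℤ^ι`. -/
abbrev freqCube : Set (ι → ℝ) := Set.Icc (fun _ => -π) (fun _ => π)

lemma intervalIntegral_exp_intCast_mul_I (n : ℤ) :
    ∫ t in -π..π, Complex.exp (n * t * Complex.I) = if n = 0 then (2 * π : ℂ) else 0 := by
  split_ifs with hn
  · simp [hn, two_mul]
  · have hc : (n * Complex.I : ℂ) ≠ 0 := mul_ne_zero (by exact_mod_cast hn) Complex.I_ne_zero
    have hperiod : (n * Complex.I * (π : ℝ) : ℂ) =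
        n * Complex.I * ((-π : ℝ) : ℂ) + n * (2 * π * Complex.I) := by
      push_cast
      ring
    simp only [mul_right_comm _ _ Complex.I]
    rw [integral_exp_mul_complex hc, hperiod, Complex.exp_add, Complex.exp_int_mul_two_pi_mul_I,
      mul_one, sub_self, zero_div]

lemma setIntegral_exp_latPair_mul_I (z : ι → ℤ) :
    ∫ θ in freqCube ι, Complex.exp (latPair z θ * Complex.I) =
      if z = 0 then (2 * π : ℂ) ^ Fintype.card ι else 0 := by
  have hprod (θ : ι → ℝ) : Complex.exp (latPair z θ * Complex.I) =
      ∏ i, Complex.exp (z i * θ i * Complex.I) := by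
    rw [← Complex.exp_sum, latPair_apply, ← Finset.sum_mul]
    push_cast
    rfl
  simp_rw [hprod]
  rw [freqCube, ← Set.pi_univ_Icc, volume_pi, Measure.restrict_pi_pi,
    integral_fintype_prod_eq_prod (fun i (t : ℝ) => Complex.exp (z i * t * Complex.I))]
  simp_rw [integral_Icc_eq_integral_Ioc,
    ← intervalIntegral.integral_of_le (neg_le_self pi_pos.le),
    intervalIntegral_exp_intCast_mul_I]
  rw [Fintype.prod_ite_zero]
  simp [funext_iff]

lemma setIntegral_cos_latPair (z : ι → ℤ) :
    ∫ θ in freqCube ι, cos (latPair z θ) = if z = 0 then (2 * π) ^ Fintype.card ι else 0 := by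
  have hint : IntegrableOn (fun θ => Complex.exp (latPair z θ * Complex.I)) (freqCube ι) :=
    (by fun_prop : Continuous _).integrableOn_Icc
  calc ∫ θ in freqCube ι, cos (latPair z θ)
      = ∫ θ in freqCube ι, (Complex.exp (latPair z θ * Complex.I)).re := by
        simp only [Complex.exp_ofReal_mul_I_re]
    _ = (∫ θ in freqCube ι, Complex.exp (latPair z θ * Complex.I)).re := integral_re hint
    _ = if z = 0 then (2 * π) ^ Fintype.card ι else 0 := by
        rw [setIntegral_exp_latPair_mul_I]
        split_ifs
        · norm_cast
        · rfl

lemma integrableOn_cos_latPair_mul {f : (ι → ℝ) → ℝ} {s : Set (ι → ℝ)} (hf : IntegrableOn f s)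
    (z : ι → ℤ) : IntegrableOn (fun θ => cos (latPair z θ) * f θ) s :=
  Integrable.bdd_mul (c := 1) hf (by fun_prop : Continuous _).aestronglyMeasurable
    (.of_forall fun _ => abs_cos_le_one _)

end Frequency

lemma integral_Ioi_integral_exp_mul {Ω : Type*} [MeasurableSpace Ω] {μ : Measure Ω} [SFinite μ]
    {ψ f : Ω → ℝ} (hψ : AEMeasurable ψ μ) (hneg : ∀ᵐ ω ∂μ, ψ ω < 0) (hf : AEMeasurable f μ)
    (hint : Integrable (fun ω => f ω * (-ψ ω)⁻¹) μ) :
    ∫ t in Set.Ioi (0 : ℝ), ∫ ω, exp (ψ ω * t) * f ω ∂μ = ∫ ω, f ω * (-ψ ω)⁻¹ ∂μ := by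
  have hlaplace {r : ℝ} (hr : r < 0) (c : ℝ) :
      ∫ t in Set.Ioi (0 : ℝ), exp (r * t) * c = c * (-r)⁻¹ := by
    rw [integral_mul_const, integral_exp_mul_Ioi hr, mul_zero, exp_zero, neg_div, one_div,
      ← inv_neg, mul_comm]
  have hmeas : AEStronglyMeasurable (Function.uncurry fun (t : ℝ) ω => exp (ψ ω * t) * f ω)
      ((volume.restrict (Set.Ioi 0)).prod μ) :=
    (((hψ.comp_snd.mul measurable_fst.aemeasurable).exp).mul hf.comp_snd).aestronglyMeasurable
  have hprod : Integrable (Function.uncurry fun (t : ℝ) ω => exp (ψ ω * t) * f ω)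
      ((volume.restrict (Set.Ioi 0)).prod μ) := by
    rw [integrable_prod_iff' hmeas]
    constructor
    · filter_upwards [hneg] with ω hω
      exact (integrableOn_exp_mul_Ioi hω 0).mul_const (f ω)
    · refine hint.norm.congr ?_
      filter_upwards [hneg] with ω hω
      simp only [Function.uncurry_apply_pair, norm_mul, norm_eq_abs, abs_exp, abs_inv, hlaplace hω,
        abs_of_pos (neg_pos.2 hω)]
  rw [integral_integral_swap hprod]
  refine integral_congr_ae ?_
  filter_upwards [hneg] with ω hω
  exact hlaplace hω (f ω)

section Generator

variable {G : Type*} [AddCommGroup G] {a h : G → ℝ}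

/-- The generator `h ↦ ∑ w, a w * h (z + w)` of the random walk with jump rates `a`. -/
noncomputable def generator (a h : G → ℝ) (z : G) : ℝ := ∑' w, a w * h (z + w)

lemma hasSum_generator (ha : Summable a) (hh : Tendsto h cofinite (𝓝 0)) (z : G) :
    HasSum (fun w => a w * h (z + w)) (generator a h z) := by
  obtain ⟨C, hC⟩ := (Metric.isBounded_range_of_tendsto_cofinite hh).exists_norm_le
  refine (Summable.of_norm_bounded (ha.abs.mul_right C) fun w => ?_).hasSum
  rw [norm_mul, norm_eq_abs]
  gcongr
  exact hC _ (Set.mem_range_self _)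

/-- Irreducible jump rates on an abelian group, with `-a 0` the total rate of leaving a point. -/
structure IsWalkGenerator (a : G → ℝ) : Prop where
  nonneg : ∀ z, z ≠ 0 → 0 ≤ a z
  apply_zero_neg : a 0 < 0
  hasSum : HasSum a 0
  irreducible : AddSubgroup.closure {z | 0 < a z} = ⊤

lemma exists_forall_le_of_tendsto_cofinite {α : Type*} {f : α → ℝ} {c : ℝ}
    (hf : Tendsto f cofinite (𝓝 c)) {x : α} (hx : f x < c) : ∃ m, ∀ y, f m ≤ f y := by
  have hfin : {y | f y ≤ f x}.Finite := by
    simpa [Filter.eventually_cofinite] using hf.eventually (lt_mem_nhds hx)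
  obtain ⟨m, hm, hmin⟩ := Set.exists_min_image _ f hfin ⟨x, le_refl (f x)⟩
  exact ⟨m, fun y => (le_total (f y) (f x)).elim (hmin y) (hm.trans ·)⟩

namespace IsWalkGenerator

lemma nontrivial (ha : IsWalkGenerator a) : Nontrivial G := by
  by_contra hG
  rw [not_nontrivial_iff_subsingleton] at hG
  have hsum : HasSum a (a 0) := hasSum_single 0 fun z hz => (hz (Subsingleton.elim z 0)).elim
  exact ha.apply_zero_neg.ne (hsum.unique ha.hasSum)

lemma mem_of_forall_pos_mem (ha : IsWalkGenerator a) {H : AddSubgroup G}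
    (hH : ∀ w, 0 < a w → w ∈ H) (z : G) : z ∈ H := by
  have hle : AddSubgroup.closure {w | 0 < a w} ≤ H := (AddSubgroup.closure_le H).2 hH
  exact hle (ha.irreducible ▸ AddSubgroup.mem_top z)

lemma eq_of_generator_nonpos (ha : IsWalkGenerator a) (hh : Tendsto h cofinite (𝓝 0)) {m : G}
    (hmin : ∀ y, h m ≤ h y) (hm : generator a h m ≤ 0) {w : G} (hw : 0 < a w) :
    h (m + w) = h m := by
  by_contra hne
  have hdiff : HasSum (fun v => a v * (h (m + v) - h m)) (generator a h m) := by
    simpa [mul_sub] using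
      (hasSum_generator ha.hasSum.summable hh m).sub (ha.hasSum.mul_right (h m))
  have hterm (v : G) : 0 ≤ a v * (h (m + v) - h m) := by
    rcases eq_or_ne v 0 with rfl | hv
    · simp
    · exact mul_nonneg (ha.nonneg v hv) (sub_nonneg.2 (hmin _))
  have hwpos : 0 < a w * (h (m + w) - h m) :=
    mul_pos hw (sub_pos.2 ((hmin _).lt_of_ne (Ne.symm hne)))
  exact hm.not_gt (hasSum_lt hterm hwpos hasSum_zero hdiff)

open scoped Pointwise in
/-- The level set of a negative minimum is finite, and the generator inequality makes it stable
under every jump; its stabilizer is then the whole group. -/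
theorem nonneg_of_generator_nonpos (ha : IsWalkGenerator a) (hh : Tendsto h cofinite (𝓝 0)) {x : G}
    (hx : 0 ≤ h x) (hsuper : ∀ z, z ≠ x → generator a h z ≤ 0) (z : G) : 0 ≤ h z := by
  by_contra! hz
  obtain ⟨m, hmin⟩ := exists_forall_le_of_tendsto_cofinite hh hz
  have hm : h m < 0 := (hmin z).trans_lt hz
  have hfin : {y | h y = h m}.Finite := by
    have hle : {y | h y ≤ h m}.Finite := by
      simpa [Filter.eventually_cofinite] using hh.eventually (lt_mem_nhds hm)
    exact hle.subset fun y (hy : h y = h m) => hy.le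
  have hstab : ∀ w, 0 < a w → w ∈ AddAction.stabilizer G {y | h y = h m} := fun w hw => by
    refine (AddAction.mem_stabilizer_set' hfin).2 fun y (hy : h y = h m) => ?_
    have hyx : y ≠ x := by
      rintro rfl
      linarith
    change h (w + y) = h m
    rw [add_comm, ← hy]
    exact ha.eq_of_generator_nonpos hh (hy ▸ hmin) (hsuper y hyx) hw
  have hxm : h (x - m + m) = h m := (AddAction.mem_stabilizer_set' hfin).1
    (ha.mem_of_forall_pos_mem hstab (x - m)) (rfl : h m = h m)
  rw [sub_add_cancel] at hxm
  linarith

end IsWalkGenerator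

end Generator

lemma hasSum_zero_of_odd {G : Type*} [AddCommGroup G] {f : G → ℝ} (hodd : Function.Odd f)
    (hf : Summable f) : HasSum f 0 := by
  have hneg : ∑' z, f z = -∑' z, f z := by
    rw [← tsum_neg, ← (Equiv.neg G).tsum_eq]
    exact tsum_congr hodd
  exact self_eq_neg.1 hneg ▸ hf.hasSum

section Symbol

variable {d : ℕ} {a : (Fin d → ℤ) → ℝ}

lemma norm_mul_cos_le (r s : ℝ) : ‖r * cos s‖ ≤ |r| := by
  rw [norm_mul]
  exact mul_le_of_le_one_right (norm_nonneg _) (abs_cos_le_one _)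

lemma norm_mul_sin_le (r s : ℝ) : ‖r * sin s‖ ≤ |r| := by
  rw [norm_mul]
  exact mul_le_of_le_one_right (norm_nonneg _) (abs_sin_le_one _)

lemma hasSum_phiSymb (ha : Summable a) (θ : Fin d → ℝ) :
    HasSum (fun z => a z * cos (latPair z θ)) (phiSymb d a θ) := by
  simp only [phiSymb, ← latPair_apply]
  exact (Summable.of_norm_bounded ha.abs fun z => norm_mul_cos_le _ _).hasSum

lemma continuous_phiSymb (ha : Summable a) : Continuous (phiSymb d a) :=
  continuous_tsum (fun z => by fun_prop) ha.abs fun z θ => norm_mul_cos_le _ _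

lemma phiSymb_zero_right (ha : HasSum a 0) : phiSymb d a 0 = 0 := by
  simp [phiSymb, ha.tsum_eq]

lemma hasSum_neg_phiSymb (ha : HasSum a 0) (θ : Fin d → ℝ) :
    HasSum (fun z => a z * (1 - cos (latPair z θ))) (-phiSymb d a θ) := by
  simpa [mul_sub] using ha.sub (hasSum_phiSymb ha.summable θ)

/-- The character `θ ↦ e^{i⟨z,θ⟩}` is an eigenfunction of a symmetric generator; this is the real
part of that fact. -/
lemma hasSum_mul_cos_latPair_add (ha : Summable a) (hsymm : Function.Even a) (z : Fin d → ℤ)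
    (θ : Fin d → ℝ) :
    HasSum (fun w => a w * cos (latPair (z + w) θ)) (cos (latPair z θ) * phiSymb d a θ) := by
  have hsin : Summable fun w => a w * sin (latPair w θ) :=
    Summable.of_norm_bounded ha.abs fun w => norm_mul_sin_le _ _
  have hodd : Function.Odd fun w => a w * sin (latPair w θ) := fun w => by
    simp [hsymm w]
  have hsin_zero := hasSum_zero_of_odd hodd hsin
  have hsub := ((hasSum_phiSymb ha θ).mul_left (cos (latPair z θ))).sub
    (hsin_zero.mul_left (sin (latPair z θ)))
  rw [mul_zero, sub_zero] at hsub
  refine hsub.congr_fun fun w => ?_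
  rw [map_add, add_apply, cos_add]
  ring

end Symbol

lemma one_sub_cos_add_le (u v : ℝ) :
    1 - cos (u + v) ≤ 2 * (1 - cos u) + 2 * (1 - cos v) := by
  rw [cos_add]
  nlinarith [sq_nonneg (cos u + cos v - 2), sq_nonneg (sin u - sin v), sin_sq_add_cos_sq u,
    sin_sq_add_cos_sq v]

lemma sq_norm_le_sum_sq {ι : Type*} [Fintype ι] (θ : ι → ℝ) : ‖θ‖ ^ 2 ≤ ∑ i, θ i ^ 2 := by
  have hnonneg : 0 ≤ ∑ i, θ i ^ 2 := Finset.sum_nonneg fun i _ => sq_nonneg (θ i)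
  refine (le_sqrt (norm_nonneg θ) hnonneg).1 ?_
  refine (pi_norm_le_iff_of_nonneg (sqrt_nonneg _)).2 fun i => abs_le_sqrt ?_
  exact Finset.single_le_sum (f := fun i => θ i ^ 2) (fun j _ => sq_nonneg (θ j))
    (Finset.mem_univ i)

lemma sq_norm_le_sum_one_sub_cos {ι : Type*} [Fintype ι] {θ : ι → ℝ} (hθ : θ ∈ freqCube ι) :
    ‖θ‖ ^ 2 ≤ π ^ 2 / 2 * ∑ i, (1 - cos (θ i)) := by
  refine (sq_norm_le_sum_sq θ).trans ?_
  rw [Finset.mul_sum]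
  refine Finset.sum_le_sum fun i _ => ?_
  calc θ i ^ 2 = π ^ 2 / 2 * (2 / π ^ 2 * θ i ^ 2) := by field_simp
    _ ≤ π ^ 2 / 2 * (1 - cos (θ i)) := by
      gcongr
      linarith [cos_le_one_sub_mul_cos_sq (abs_le.2 ⟨hθ.1 i, hθ.2 i⟩)]

/-- The Fourier-analytic form of transience: `G_0(0, 0) = (2π)^{-d} ∫ (-φ)⁻¹` is finite. It is only
meaningful where `φ < 0` almost everywhere, because `0⁻¹ = 0`. -/
def IsTransient {d : ℕ} (a : (Fin d → ℤ) → ℝ) : Prop :=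
  IntegrableOn (fun θ => (-phiSymb d a θ)⁻¹) (freqCube (Fin d))

namespace IsWalkGenerator

variable {d : ℕ} {a : (Fin d → ℤ) → ℝ}

lemma mul_one_sub_cos_nonneg (ha : IsWalkGenerator a) (z : Fin d → ℤ) (θ : Fin d → ℝ) :
    0 ≤ a z * (1 - cos (latPair z θ)) := by
  rcases eq_or_ne z 0 with rfl | hz
  · simp
  · exact mul_nonneg (ha.nonneg z hz) (sub_nonneg.2 (cos_le_one _))

lemma neg_phiSymb_nonneg (ha : IsWalkGenerator a) (θ : Fin d → ℝ) : 0 ≤ -phiSymb d a θ :=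
  (hasSum_neg_phiSymb ha.hasSum θ).nonneg fun z => ha.mul_one_sub_cos_nonneg z θ

lemma neg_phiSymb_le (ha : IsWalkGenerator a) (θ : Fin d → ℝ) : -phiSymb d a θ ≤ -2 * a 0 := by
  have hrest : HasSum (fun z => 2 * (a z - Pi.single (M := fun _ => ℝ) 0 (a 0) z))
      (2 * (0 - a 0)) :=
    (ha.hasSum.sub (hasSum_pi_single 0 (a 0))).mul_left 2
  have hle (z : Fin d → ℤ) : a z * (1 - cos (latPair z θ)) ≤
      2 * (a z - Pi.single (M := fun _ => ℝ) 0 (a 0) z) := by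
    rcases eq_or_ne z 0 with rfl | hz
    · simp
    · rw [Pi.single_eq_of_ne hz]
      nlinarith [ha.nonneg z hz, neg_one_le_cos (latPair z θ)]
  linarith [hasSum_le hle (hasSum_neg_phiSymb ha.hasSum θ) hrest]

/-- Comparison with a single jump is immediate, and `1 - cos` is subadditive up to a factor `2`, so
irreducibility carries the comparison to every lattice point. -/
lemma exists_one_sub_cos_le (ha : IsWalkGenerator a) (w : Fin d → ℤ) :
    ∃ C, ∀ θ, 1 - cos (latPair w θ) ≤ C * -phiSymb d a θ := by
  have hw : w ∈ AddSubgroup.closure {z | 0 < a z} := ha.irreducible ▸ AddSubgroup.mem_top w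
  induction hw using AddSubgroup.closure_induction with
  | mem z hz =>
    refine ⟨(a z)⁻¹, fun θ => ?_⟩
    rw [le_inv_mul_iff₀ hz]
    exact le_hasSum (hasSum_neg_phiSymb ha.hasSum θ) z fun w _ => ha.mul_one_sub_cos_nonneg w θ
  | zero => exact ⟨0, fun θ => by simp⟩
  | add u v _ _ hu hv =>
    obtain ⟨C, hu⟩ := hu
    obtain ⟨D, hv⟩ := hv
    refine ⟨2 * C + 2 * D, fun θ => ?_⟩
    rw [map_add, add_apply]
    linarith [one_sub_cos_add_le (latPair u θ) (latPair v θ), hu θ, hv θ]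
  | neg u _ hu => simpa using hu

lemma exists_sq_norm_le (ha : IsWalkGenerator a) :
    ∃ C, ∀ θ ∈ freqCube (Fin d), ‖θ‖ ^ 2 ≤ C * -phiSymb d a θ := by
  choose C hC using fun i : Fin d => ha.exists_one_sub_cos_le (Pi.single i 1)
  refine ⟨π ^ 2 / 2 * ∑ i, C i, fun θ hθ => ?_⟩
  calc ‖θ‖ ^ 2 ≤ π ^ 2 / 2 * ∑ i, (1 - cos (θ i)) := sq_norm_le_sum_one_sub_cos hθ
    _ ≤ π ^ 2 / 2 * ∑ i, C i * -phiSymb d a θ := by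
      gcongr with i
      simpa only [latPair_single] using hC i θ
    _ = π ^ 2 / 2 * (∑ i, C i) * -phiSymb d a θ := by rw [← Finset.sum_mul, mul_assoc]

lemma phiSymb_neg (ha : IsWalkGenerator a) {θ : Fin d → ℝ} (hθ : θ ∈ freqCube (Fin d))
    (h0 : θ ≠ 0) : phiSymb d a θ < 0 := by
  obtain ⟨C, hC⟩ := ha.exists_sq_norm_le
  refine (neg_nonneg.1 (ha.neg_phiSymb_nonneg θ)).lt_of_ne fun hφ => ?_
  have hnorm : 0 < ‖θ‖ ^ 2 := by positivity
  have hle := hC θ hθ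
  rw [hφ, neg_zero, mul_zero] at hle
  exact hle.not_gt hnorm

lemma ae_phiSymb_neg (ha : IsWalkGenerator a) :
    ∀ᵐ θ ∂volume.restrict (freqCube (Fin d)), phiSymb d a θ < 0 := by
  have : Nonempty (Fin d) := by
    by_contra! hd
    exact not_nontrivial _ ha.nontrivial
  rw [ae_restrict_iff' measurableSet_Icc]
  filter_upwards [Measure.ae_ne volume (0 : Fin d → ℝ)] with θ h0 hθ
  exact ha.phiSymb_neg hθ h0

/-- On the cube `(-φ)⁻¹` is at most a multiple of `‖θ‖⁻²`, which is integrable near the origin in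
dimension at least three. -/
lemma isTransient (ha : IsWalkGenerator a) (hd : 3 ≤ d) : IsTransient a := by
  obtain ⟨C, hC⟩ := ha.exists_sq_norm_le
  have hbound (θ : Fin d → ℝ) :
      ‖(freqCube (Fin d)).indicator (fun θ => (-phiSymb d a θ)⁻¹) θ‖ ≤ |C| * ‖θ‖ ^ (-2 : ℝ) := by
    rw [rpow_neg (norm_nonneg θ), rpow_two]
    by_cases hθ : θ ∈ freqCube (Fin d)
    · rw [Set.indicator_of_mem hθ, norm_inv, norm_of_nonneg (ha.neg_phiSymb_nonneg θ)]
      rcases eq_or_ne θ 0 with rfl | h0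
      · simp [phiSymb_zero_right ha.hasSum]
      · have hφ := neg_pos.2 (ha.phiSymb_neg hθ h0)
        have hnorm : 0 < ‖θ‖ ^ 2 := by positivity
        rw [← div_eq_mul_inv, le_div_iff₀ hnorm, inv_mul_le_iff₀ hφ, mul_comm]
        exact (hC θ hθ).trans (by gcongr; exact le_abs_self C)
    · rw [Set.indicator_of_notMem hθ, norm_zero]
      positivity
  have hmeas : Measurable fun θ => (-phiSymb d a θ)⁻¹ :=
    (continuous_phiSymb ha.hasSum.summable).neg.measurable.inv
  have hloc := locallyIntegrable_of_norm_le_rpow (μ := volume) (α := 2)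
    (by rw [Module.finrank_fin_fun]; lia) (by rw [Module.finrank_fin_fun]; exact_mod_cast hd)
    (.of_forall hbound) (hmeas.indicator measurableSet_Icc).aestronglyMeasurable
  refine (hloc.integrableOn_isCompact isCompact_Icc).congr_fun ?_ measurableSet_Icc
  exact fun θ hθ => Set.indicator_of_mem hθ _

end IsWalkGenerator

section GreenKernel

variable {d : ℕ} {a : (Fin d → ℤ) → ℝ}

/-- The Green's function `G_0(0, z)` in Fourier form, obtained by carrying out the time integral. -/
noncomputable def greenKernel (a : (Fin d → ℤ) → ℝ) (z : Fin d → ℤ) : ℝ :=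
  ((2 * π) ^ d)⁻¹ * ∫ θ in freqCube (Fin d), cos (latPair z θ) * (-phiSymb d a θ)⁻¹

lemma tendsto_greenKernel (ht : IsTransient a) :
    Tendsto (greenKernel a) cofinite (𝓝 0) := by
  have hlim := (tendsto_integral_cos_latPair_mul
    ((integrable_indicator_iff measurableSet_Icc).2 ht)).const_mul ((2 * π) ^ d)⁻¹
  rw [mul_zero] at hlim
  refine hlim.congr fun z => ?_
  rw [greenKernel, ← integral_indicator measurableSet_Icc]
  simp only [Set.indicator_mul_right]

lemma greenKernel_zero_sub (ht : IsTransient a) (z : Fin d → ℤ) :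
    greenKernel a 0 - greenKernel a z =
      ((2 * π) ^ d)⁻¹ *
        ∫ θ in freqCube (Fin d), (1 - cos (latPair z θ)) * (-phiSymb d a θ)⁻¹ := by
  rw [greenKernel, greenKernel, ← mul_sub,
    ← integral_sub (integrableOn_cos_latPair_mul ht 0) (integrableOn_cos_latPair_mul ht z)]
  simp only [map_zero, zero_apply, cos_zero, ← sub_mul]

namespace IsWalkGenerator

/-- The kernel is a fundamental solution: `-φ` cancels and leaves the orthogonality relation of
the characters. -/
lemma generator_greenKernel (ha : IsWalkGenerator a) (ht : IsTransient a)
    (hsymm : Function.Even a) (z : Fin d → ℤ) :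
    generator a (greenKernel a) z = if z = 0 then -1 else 0 := by
  set F : (Fin d → ℤ) → (Fin d → ℝ) → ℝ := fun w θ =>
    a w * (cos (latPair (z + w) θ) * (-phiSymb d a θ)⁻¹)
  have hbound (w : Fin d → ℤ) (θ : Fin d → ℝ) : ‖F w θ‖ ≤ |a w| * ‖(-phiSymb d a θ)⁻¹‖ := by
    rw [norm_mul, norm_mul, norm_eq_abs (a w)]
    gcongr
    exact mul_le_of_le_one_left (norm_nonneg _) (abs_cos_le_one _)
  have hcancel : ∀ᵐ θ ∂volume.restrict (freqCube (Fin d)),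
      HasSum (fun w => F w θ) (-cos (latPair z θ)) := by
    filter_upwards [ha.ae_phiSymb_neg] with θ hθ
    have hsum := (hasSum_mul_cos_latPair_add ha.hasSum.summable hsymm z θ).mul_right
      (-phiSymb d a θ)⁻¹
    rw [mul_assoc, inv_neg, mul_neg, mul_inv_cancel₀ hθ.ne, mul_neg_one] at hsum
    simpa only [F, mul_assoc, inv_neg] using hsum
  have hswap := hasSum_integral_of_dominated_convergence _
    (fun w => ((integrableOn_cos_latPair_mul ht (z + w)).const_mul (a w)).aestronglyMeasurable)
    (fun w => .of_forall (hbound w))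
    (.of_forall fun θ => ha.hasSum.summable.abs.mul_right _)
    (by simpa only [tsum_mul_right] using ht.norm.const_mul (∑' w, |a w|)) hcancel
  simp only [integral_const_mul] at hswap
  have hgen : HasSum (fun w => a w * greenKernel a (z + w))
      (((2 * π) ^ d)⁻¹ * ∫ θ in freqCube (Fin d), -cos (latPair z θ)) :=
    (hswap.mul_left ((2 * π) ^ d)⁻¹).congr_fun fun w => mul_left_comm _ _ _
  rw [generator, hgen.tsum_eq, integral_neg, setIntegral_cos_latPair, Fintype.card_fin]
  split_ifs
  · rw [mul_neg, inv_mul_cancel₀ (by positivity)]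
  · rw [neg_zero, mul_zero]

lemma inv_le_greenKernel_zero_sub (ha : IsWalkGenerator a) (ht : IsTransient a)
    {x : Fin d → ℤ} (hx : x ≠ 0) :
    (-2 * a 0)⁻¹ ≤ greenKernel a 0 - greenKernel a x := by
  have hcos : IntegrableOn (fun θ => cos (latPair x θ)) (freqCube (Fin d)) :=
    (by fun_prop : Continuous _).integrableOn_Icc
  have hone : ∫ θ in freqCube (Fin d), (1 - cos (latPair x θ)) = (2 * π) ^ d := by
    have hvol : ∫ _ in freqCube (Fin d), (1 : ℝ) = (2 * π) ^ d := by
      simpa using setIntegral_cos_latPair (0 : Fin d → ℤ)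
    rw [integral_sub continuousOn_const.integrableOn_Icc hcos, hvol, setIntegral_cos_latPair,
      if_neg hx, sub_zero]
  calc (-2 * a 0)⁻¹
      = ((2 * π) ^ d)⁻¹ * ∫ θ in freqCube (Fin d), (1 - cos (latPair x θ)) * (-2 * a 0)⁻¹ := by
        rw [integral_mul_const, hone, inv_mul_cancel_left₀ (by positivity)]
    _ ≤ ((2 * π) ^ d)⁻¹ *
          ∫ θ in freqCube (Fin d), (1 - cos (latPair x θ)) * (-phiSymb d a θ)⁻¹ := by
        gcongr ?_ * ?_
        refine integral_mono_ae ((continuousOn_const.integrableOn_Icc.sub hcos).mul_const _)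
          ((Integrable.sub ht (integrableOn_cos_latPair_mul ht x)).congr <| .of_forall fun θ =>
            (one_sub_mul _ _).symm) ?_
        filter_upwards [ha.ae_phiSymb_neg] with θ hθ
        refine mul_le_mul_of_nonneg_left ?_ (sub_nonneg.2 (cos_le_one _))
        exact inv_anti₀ (neg_pos.2 hθ) (ha.neg_phiSymb_le θ)
    _ = greenKernel a 0 - greenKernel a x := (greenKernel_zero_sub ht x).symm

lemma greenKernel_lt_greenKernel_zero (ha : IsWalkGenerator a) (ht : IsTransient a)
    {x : Fin d → ℤ} (hx : x ≠ 0) : greenKernel a x < greenKernel a 0 := by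
  have hpos : 0 < (-2 * a 0)⁻¹ := inv_pos.2 (by linarith [ha.apply_zero_neg])
  exact sub_pos.1 (hpos.trans_le (ha.inv_le_greenKernel_zero_sub ht hx))

lemma greenKernel_zero_nonneg (ha : IsWalkGenerator a) : 0 ≤ greenKernel a 0 := by
  refine mul_nonneg (by positivity) (integral_nonneg fun θ => ?_)
  simpa using ha.neg_phiSymb_nonneg θ

lemma greenKernel_nonneg (ha : IsWalkGenerator a) (ht : IsTransient a) (hsymm : Function.Even a)
    (z : Fin d → ℤ) : 0 ≤ greenKernel a z := by
  refine ha.nonneg_of_generator_nonpos (tendsto_greenKernel ht) ha.greenKernel_zero_nonneg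
    (fun w hw => ?_) z
  rw [ha.generator_greenKernel ht hsymm, if_neg hw]

lemma greenKernel_zero_pos (ha : IsWalkGenerator a) (ht : IsTransient a)
    (hsymm : Function.Even a) : 0 < greenKernel a 0 := by
  have := ha.nontrivial
  obtain ⟨x, hx⟩ := exists_ne (0 : Fin d → ℤ)
  exact (ha.greenKernel_nonneg ht hsymm x).trans_lt (ha.greenKernel_lt_greenKernel_zero ht hx)

/-- Dividing by `(greenKernel a 0) ^ 2` turns this into hitting probabilities: the walk from `0` is
at least as likely to hit `y` as to hit first `x` and then `y`. -/
theorem greenKernel_mul_le (ha : IsWalkGenerator a) (ht : IsTransient a)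
    (hsymm : Function.Even a) (x y : Fin d → ℤ) :
    greenKernel a x * greenKernel a (y - x) ≤ greenKernel a 0 * greenKernel a y := by
  set h : (Fin d → ℤ) → ℝ := fun z =>
    greenKernel a 0 * greenKernel a z - greenKernel a x * greenKernel a (z - x)
  have hlim := tendsto_greenKernel ht
  have hlim_shift : Tendsto (fun z => greenKernel a (z - x)) cofinite (𝓝 0) :=
    hlim.comp (sub_left_injective (b := x)).tendsto_cofinite
  have hh : Tendsto h cofinite (𝓝 0) := by
    simpa using (hlim.const_mul (greenKernel a 0)).sub (hlim_shift.const_mul (greenKernel a x))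
  have hgen (z : Fin d → ℤ) : generator a h z =
      greenKernel a 0 * generator a (greenKernel a) z -
        greenKernel a x * generator a (greenKernel a) (z - x) := by
    have hsum (z : Fin d → ℤ) := hasSum_generator ha.hasSum.summable hlim z
    refine HasSum.tsum_eq <| (((hsum z).mul_left (greenKernel a 0)).sub
      ((hsum (z - x)).mul_left (greenKernel a x))).congr_fun fun w => ?_
    simp only [h, sub_add_eq_add_sub]
    ring
  refine sub_nonneg.1 (ha.nonneg_of_generator_nonpos hh (x := x) ?_ (fun z hz => ?_) y)
  · simp [h, mul_comm]
  · rw [hgen, ha.generator_greenKernel ht hsymm, ha.generator_greenKernel ht hsymm,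
      if_neg (sub_ne_zero.2 hz), mul_zero, sub_zero]
    refine mul_nonpos_of_nonneg_of_nonpos ha.greenKernel_zero_nonneg ?_
    split_ifs <;> norm_num

theorem greenKernel_add_lt (ha : IsWalkGenerator a) (ht : IsTransient a)
    (hsymm : Function.Even a) {x y : Fin d → ℤ} (hx : x ≠ 0) (hxy : x ≠ y) :
    greenKernel a x + greenKernel a (y - x) < greenKernel a 0 + greenKernel a y := by
  have hmul := ha.greenKernel_mul_le ht hsymm x y
  have hgap := mul_pos (sub_pos.2 (ha.greenKernel_lt_greenKernel_zero ht hx))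
    (sub_pos.2 (ha.greenKernel_lt_greenKernel_zero ht (sub_ne_zero.2 hxy.symm)))
  refine lt_of_mul_lt_mul_left ?_ ha.greenKernel_zero_nonneg
  linarith

lemma Glam_zero_eq_greenKernel (ha : IsWalkGenerator a) (ht : IsTransient a)
    (x y : Fin d → ℤ) : Glam d a 0 x y = greenKernel a (y - x) := by
  have hpair (θ : Fin d → ℝ) : ∑ i, θ i * ((y i : ℝ) - x i) = latPair (y - x) θ := by
    simp only [latPair_apply, Pi.sub_apply, Int.cast_sub, mul_comm]
  simp only [Glam, ptrans, neg_zero, zero_mul, exp_zero, one_mul, hpair]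
  rw [integral_const_mul, greenKernel, integral_Ioi_integral_exp_mul
    (continuous_phiSymb ha.hasSum.summable).aemeasurable ha.ae_phiSymb_neg
    (by fun_prop : Continuous _).aemeasurable (integrableOn_cos_latPair_mul ht _)]

end IsWalkGenerator

lemma rhoConst_eq (ht : IsTransient a) {z : Fin d → ℤ} (hz : z ≠ 0) :
    rhoConst d a z = -a 0 * (greenKernel a 0 - greenKernel a z) := by
  rw [rhoConst, if_neg hz, greenKernel_zero_sub ht, div_eq_mul_inv, mul_assoc]
  simp only [← latPair_apply, inv_neg, mul_neg, ← neg_mul, neg_sub, div_eq_mul_inv]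

namespace IsWalkGenerator

theorem Glam_add_lt (ha : IsWalkGenerator a) (ht : IsTransient a) (hsymm : Function.Even a)
    {x y : Fin d → ℤ} (hx : x ≠ 0) (hxy : x ≠ y) :
    Glam d a 0 0 x + Glam d a 0 x y < Glam d a 0 0 0 + Glam d a 0 0 y := by
  simp only [ha.Glam_zero_eq_greenKernel ht, sub_zero]
  exact ha.greenKernel_add_lt ht hsymm hx hxy

theorem rhoConst_lt_add (ha : IsWalkGenerator a) (ht : IsTransient a) (hsymm : Function.Even a)
    {x y : Fin d → ℤ} (hx : x ≠ 0) (hy : y ≠ 0) (hxy : x ≠ y) :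
    rhoConst d a y < rhoConst d a x + rhoConst d a (y - x) := by
  rw [rhoConst_eq ht hx, rhoConst_eq ht hy, rhoConst_eq ht (sub_ne_zero.2 hxy.symm), ← mul_add]
  refine mul_lt_mul_of_pos_left ?_ (neg_pos.2 ha.apply_zero_neg)
  linarith [ha.greenKernel_add_lt ht hsymm hx hxy]

lemma Glam_zero_add_pos (ha : IsWalkGenerator a) (ht : IsTransient a) (hsymm : Function.Even a)
    (y : Fin d → ℤ) : 0 < Glam d a 0 0 0 + Glam d a 0 0 y := by
  simp only [ha.Glam_zero_eq_greenKernel ht, sub_zero]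
  exact add_pos_of_pos_of_nonneg (ha.greenKernel_zero_pos ht hsymm)
    (ha.greenKernel_nonneg ht hsymm y)

end IsWalkGenerator

end GreenKernel

section Hessian

variable {d : ℕ} {a : (Fin d → ℤ) → ℝ}

open scoped Matrix

lemma summable_mul_apply_mul_apply
    (hvar : Summable fun z : Fin d → ℤ => (∑ i, (z i : ℝ) ^ 2) * a z) (i j : Fin d) :
    Summable fun z : Fin d → ℤ => a z * z i * z j := by
  refine Summable.of_norm_bounded hvar.abs fun z => ?_
  have hi := Finset.single_le_sum (f := fun i => (z i : ℝ) ^ 2) (fun k _ => sq_nonneg _)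
    (Finset.mem_univ i)
  have hj := Finset.single_le_sum (f := fun i => (z i : ℝ) ^ 2) (fun k _ => sq_nonneg _)
    (Finset.mem_univ j)
  have hsq : |(z i : ℝ) * z j| ≤ ∑ i, (z i : ℝ) ^ 2 :=
    abs_le_of_sq_le_sq (by nlinarith [mul_le_mul hi hj (sq_nonneg _) ((sq_nonneg _).trans hi)])
      ((sq_nonneg _).trans hi)
  rw [mul_assoc, norm_mul, abs_mul, mul_comm, norm_eq_abs, norm_eq_abs,
    abs_of_nonneg ((sq_nonneg _).trans hi)]
  gcongr

lemma hasSum_mul_latPair_sq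
    (hvar : Summable fun z : Fin d → ℤ => (∑ i, (z i : ℝ) ^ 2) * a z) (v : Fin d → ℝ) :
    HasSum (fun z => a z * latPair z v ^ 2) (v ⬝ᵥ (-hessPhi d a) *ᵥ v) := by
  have hsum : HasSum (fun z : Fin d → ℤ => ∑ i, ∑ j, v i * (a z * z i * z j * v j))
      (v ⬝ᵥ (-hessPhi d a) *ᵥ v) := by
    simp only [dotProduct, Matrix.mulVec, Matrix.neg_apply, hessPhi, Matrix.of_apply, neg_neg,
      Finset.mul_sum]
    exact hasSum_sum fun i _ => hasSum_sum fun j _ =>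
      ((summable_mul_apply_mul_apply hvar i j).hasSum.mul_right (v j)).mul_left (v i)
  refine hsum.congr_fun fun z => ?_
  rw [latPair_apply, sq, Finset.sum_mul_sum, Finset.mul_sum]
  refine Finset.sum_congr rfl fun i _ => ?_
  rw [Finset.mul_sum]
  exact Finset.sum_congr rfl fun j _ => by ring

namespace IsWalkGenerator

lemma exists_pos_latPair_ne_zero (ha : IsWalkGenerator a) {v : Fin d → ℝ} (hv : v ≠ 0) :
    ∃ z, 0 < a z ∧ latPair z v ≠ 0 := by
  by_contra! hzero
  let evalAt : (Fin d → ℤ) →+ ℝ :=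
    (ContinuousLinearMap.apply ℝ ℝ v : _ →L[ℝ] ℝ).toLinearMap.toAddMonoidHom.comp latPair
  have hker (z : Fin d → ℤ) : z ∈ evalAt.ker := ha.mem_of_forall_pos_mem hzero z
  refine hv (funext fun i => ?_)
  rw [← latPair_single i v]
  exact hker (Pi.single i 1)

lemma posDef_neg_hessPhi (ha : IsWalkGenerator a)
    (hvar : Summable fun z : Fin d → ℤ => (∑ i, (z i : ℝ) ^ 2) * a z) :
    (-hessPhi d a).PosDef := by
  refine .of_dotProduct_mulVec_pos (.ext fun i j => ?_) fun v hv => ?_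
  · simp [hessPhi, mul_right_comm]
  obtain ⟨w, hw, hwv⟩ := ha.exists_pos_latPair_ne_zero hv
  have hterm (z : Fin d → ℤ) : 0 ≤ a z * latPair z v ^ 2 := by
    rcases eq_or_ne z 0 with rfl | hz
    · simp
    · exact mul_nonneg (ha.nonneg z hz) (sq_nonneg _)
  exact hasSum_lt hterm (by positivity : 0 < a w * latPair w v ^ 2) hasSum_zero
    (hasSum_mul_latPair_sq hvar v)

lemma gammaConst_pos (ha : IsWalkGenerator a)
    (hvar : Summable fun z : Fin d → ℤ => (∑ i, (z i : ℝ) ^ 2) * a z) :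
    0 < gammaConst d a := by
  have hdet : (hessPhi d a).det ≠ 0 := by
    have hunit := (IsUnit.neg_iff _).1 (ha.posDef_neg_hessPhi hvar).isUnit
    exact ((Matrix.isUnit_iff_isUnit_det _).1 hunit).ne_zero
  rw [gammaConst]
  positivity

end IsWalkGenerator

end Hessian

/-- For `d ≥ 3` and `x, y ≠ 0`, `x ≠ y`: the strict inequality
`G_0(0,x) + G_0(x,y) < G_0(0,0) + G_0(0,y)` holds; equivalently
`ρ_d(x) + ρ_d(y-x) > ρ_d(y)`, so that `C_d(x,y) > 0`. -/
theorem green_strict_inequality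
    (d : ℕ) (hd : 1 ≤ d) (a : (Fin d → ℤ) → ℝ)
    (hpos : ∀ z : Fin d → ℤ, z ≠ 0 → 0 ≤ a z)
    (hneg : a 0 < 0)
    (hsymm : ∀ z : Fin d → ℤ, a (-z) = a z)
    (hsum : HasSum a 0)
    (hvar : Summable fun z : Fin d → ℤ => (∑ i, ((z i : ℝ)) ^ 2) * a z)
    (hirr : AddSubgroup.closure {z : Fin d → ℤ | 0 < a z} = ⊤)
    (hd3 : 3 ≤ d) (x y : Fin d → ℤ) (hx : x ≠ 0) (hy : y ≠ 0) (hxy : x ≠ y) :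
    Glam d a 0 0 x + Glam d a 0 x y < Glam d a 0 0 0 + Glam d a 0 0 y ∧
    rhoConst d a y < rhoConst d a x + rhoConst d a (y - x) ∧
    0 < 2 * gammaConst d a * (rhoConst d a (y - x) + rhoConst d a x - rhoConst d a y) /
        ((-(a 0)) * ((d : ℝ) - 2) * (Glam d a 0 0 0 + Glam d a 0 0 y) ^ 2) := by
  have ha : IsWalkGenerator a := ⟨hpos, hneg, hsum, hirr⟩
  have ht : IsTransient a := ha.isTransient hd3
  have hrho := ha.rhoConst_lt_add ht hsymm hx hy hxy
  refine ⟨ha.Glam_add_lt ht hsymm hx hxy, hrho, ?_⟩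
  have hγ : 0 < gammaConst d a := ha.gammaConst_pos hvar
  have hC : 0 < rhoConst d a (y - x) + rhoConst d a x - rhoConst d a y := by linarith
  have hG := ha.Glam_zero_add_pos ht hsymm y
  have hd2 : 0 < (d : ℝ) - 2 := sub_pos.2 (by exact_mod_cast hd3)
  exact div_pos (by positivity) (mul_pos (mul_pos (neg_pos.2 hneg) hd2) (pow_pos hG 2))
end

section
/- If d = 2, then for all x, y ∈ ℤ² with y ≠ 0, x ≠ 0 and x ≠ y, the strict triangle inequality ρ_2(x) + ρ_2(y - x) > ρ_2(y) holds (so that C_2(x, y) := (ρ_2(y-x) + ρ_2(x) - ρ_2(y))/(4aγ_2) is strictly positive). -/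
/-!
Put `A(x) = ∫ (1 - cos⟨x,θ⟩) / (-φ(θ)) dθ`, so that `ρ = const * A` off the origin. The triangle
inequality says that `K(y, w) = A(y) + A(w) - A(w - y)` is positive for `y, w ≠ 0`. When `-φ` is
replaced by `κ - φ` with `κ > 0`, the function `K(y, ·)` is bounded, vanishes at `0` and satisfies
`L K - κ K = -κ A(y) - (2π)^d δ_y ≤ 0` off the origin, `L` being the generator, so it is nonnegative
by the minimum principle. In the limit `κ → 0`, a zero `w ≠ 0` of `K(y, ·)` forces zeros at all
`w + s` with `a(s) > 0`. For `d ≥ 2` the group `ℤ^d` is not cyclic, so its Cayley graph stays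
connected when the origin is deleted; the zeros then reach `y`, where the mass `-(2π)^d` in the
equation excludes a zero.
-/

open MeasureTheory Real Filter Topology Asymptotics

section CayleyGraph

lemma mem_of_forall_add_mem {G : Type*} [AddGroup G] {S T : Set G}
    (hS : AddSubgroup.closure S = ⊤) (hneg : ∀ s ∈ S, -s ∈ S)
    (hT : ∀ w ∈ T, ∀ s ∈ S, w + s ∈ T) {w : G} (hw : w ∈ T) (v : G) : v ∈ T := by
  obtain ⟨u, rfl⟩ : ∃ u, w + u = v := ⟨-w + v, add_neg_cancel_left w v⟩
  have hu : u ∈ AddSubgroup.closure S := hS ▸ AddSubgroup.mem_top u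
  induction hu using AddSubgroup.closure_induction_right with
  | zero => rwa [add_zero]
  | add_right x _ s hs hx => exact add_assoc w x s ▸ hT _ hx s hs
  | add_neg_cancel x _ s hs hx => exact add_assoc w x (-s) ▸ hT _ hx (-s) (hneg s hs)

variable {G : Type*} [AddCommGroup G] {S R : Set G}

lemma exists_mem_notMem_zmultiples (hG : ¬IsAddCyclic G) (hS : AddSubgroup.closure S = ⊤) (g : G) :
    ∃ s ∈ S, s ∉ AddSubgroup.zmultiples g := by
  by_contra! h
  refine hG (isAddCyclic_iff_exists_zmultiples_eq_top.mpr ⟨g, top_le_iff.mp ?_⟩)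
  rw [← hS, AddSubgroup.closure_le]
  exact h

lemma exists_generator_mem (hS : AddSubgroup.closure S = ⊤) (hneg : ∀ s ∈ S, -s ∈ S)
    (hR : ∀ w ∈ R, w ≠ 0 → ∀ s ∈ S, w + s ∈ R) {w : G} (hw : w ∈ R) (hw0 : w ≠ 0) :
    ∃ s ∈ S, s ≠ 0 ∧ s ∈ R := by
  by_contra! h
  refine (mem_of_forall_add_mem (T := R \ {0}) hS hneg ?_ ⟨hw, hw0⟩ 0).2 rfl
  refine fun v ⟨hv, hv0⟩ s hs => ⟨hR v hv hv0 s hs, fun hvs => ?_⟩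
  obtain rfl : v = -s := eq_neg_of_add_eq_zero_left hvs
  exact h (-s) (hneg s hs) hv0 hv

lemma generators_subset (hG : ¬IsAddCyclic G) (hS : AddSubgroup.closure S = ⊤)
    (hneg : ∀ s ∈ S, -s ∈ S) (hR : ∀ w ∈ R, w ≠ 0 → ∀ s ∈ S, w + s ∈ R) {s : G} (hs : s ∈ S)
    (hs0 : s ≠ 0) (hsR : s ∈ R) : S ⊆ R := by
  -- The path `p, p + q, q` avoids the origin.
  have detour : ∀ p ∈ S, p ≠ 0 → p ∈ R → ∀ q ∈ S, q ≠ -p → q ∈ R := by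
    intro p hp hp0 hpR q hq hqp
    have hpq : p + q ≠ 0 := fun h => hqp (eq_neg_of_add_eq_zero_right h)
    simpa using hR _ (hR p hpR hp0 q hq) hpq _ (hneg p hp)
  intro q hq
  by_cases hqs : q = -s
  · obtain ⟨t, ht, hts⟩ := exists_mem_notMem_zmultiples hG hS s
    have ht0 : t ≠ 0 := fun h => hts (h ▸ zero_mem _)
    have hts' : t ≠ -s := fun h => hts (h ▸ neg_mem (AddSubgroup.mem_zmultiples s))
    have hqt : q ≠ -t := fun h =>
      hts (neg_injective (hqs.symm.trans h) ▸ AddSubgroup.mem_zmultiples s)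
    exact detour t ht ht0 (detour s hs hs0 hsR t ht hts') q hq hqt
  · exact detour s hs hs0 hsR q hq hqs

theorem mem_of_forall_add_mem_of_ne_zero (hG : ¬IsAddCyclic G) (hS : AddSubgroup.closure S = ⊤)
    (hneg : ∀ s ∈ S, -s ∈ S) (hR : ∀ w ∈ R, w ≠ 0 → ∀ s ∈ S, w + s ∈ R) {w v : G} (hw : w ∈ R)
    (hw0 : w ≠ 0) (hv0 : v ≠ 0) : v ∈ R := by
  obtain ⟨s, hs, hs0, hsR⟩ := exists_generator_mem hS hneg hR hw hw0
  have hSR := generators_subset hG hS hneg hR hs hs0 hsR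
  refine (mem_of_forall_add_mem (T := insert 0 R) hS hneg ?_ (Or.inl rfl) v).resolve_left hv0
  rintro u hu t ht
  rcases eq_or_ne u 0 with rfl | hu0
  · exact .inr (by simpa using hSR ht)
  · exact .inr (hR u (hu.resolve_left hu0) hu0 t ht)

lemma not_isAddCyclic_pi_int (ι : Type*) [Nontrivial ι] : ¬IsAddCyclic (ι → ℤ) := by
  classical
  intro h
  obtain ⟨g, hg⟩ := isAddCyclic_iff_exists_zmultiples_eq_top.mp h
  have hmul : ∀ v : ι → ℤ, ∃ k : ℤ, k • g = v := fun v =>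
    AddSubgroup.mem_zmultiples_iff.mp (hg ▸ AddSubgroup.mem_top v)
  obtain ⟨i, j, hij⟩ := exists_pair_ne ι
  obtain ⟨m, hm⟩ := hmul (Pi.single i 1)
  obtain ⟨n, hn⟩ := hmul (Pi.single j 1)
  have hmi : m * g i = 1 := by simpa using congrFun hm i
  have hmj : m * g j = 0 := by simpa [hij.symm] using congrFun hm j
  have hnj : n * g j = 1 := by simpa using congrFun hn j
  grind

end CayleyGraph

/-- Jump rates of a translation-invariant Markov chain: `a z` is the rate of the jumps `w ↦ w + z`
for `z ≠ 0`, and `a 0` is minus the total jump rate. The generator is `u ↦ ∑ z, a z * u (w + z)`. -/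
structure IsJumpRate {G : Type*} [Zero G] (a : G → ℝ) : Prop where
  nonneg : ∀ z, z ≠ 0 → 0 ≤ a z
  hasSum : HasSum a 0

namespace IsJumpRate

lemma apply_zero_nonpos {G : Type*} [Zero G] {a : G → ℝ} (ha : IsJumpRate a) : a 0 ≤ 0 :=
  le_hasSum ha.hasSum 0 ha.nonneg

lemma ne_zero_of_pos {G : Type*} [Zero G] {a : G → ℝ} (ha : IsJumpRate a) {s : G} (hs : 0 < a s) :
    s ≠ 0 := by
  rintro rfl
  exact hs.not_ge ha.apply_zero_nonpos

lemma apply_zero_neg {G : Type*} [AddGroup G] [Nontrivial G] {a : G → ℝ} (ha : IsJumpRate a)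
    (hirr : AddSubgroup.closure {z | 0 < a z} = ⊤) : a 0 < 0 := by
  refine ha.apply_zero_nonpos.lt_of_ne fun h0 => ?_
  have hnonneg : 0 ≤ a := fun z => by
    rcases eq_or_ne z 0 with rfl | hz
    exacts [h0.ge, ha.nonneg z hz]
  have hzero : a = 0 := (hasSum_zero_iff_of_nonneg hnonneg).mp ha.hasSum
  simp [hzero] at hirr

theorem nonneg_of_superharmonic {G : Type*} [AddMonoid G] {a : G → ℝ} (ha : IsJumpRate a) {κ : ℝ}
    (hκ : 0 < κ) {u : G → ℝ} {E : Set G} (hbdd : BddBelow (Set.range u)) (hE : ∀ w ∈ E, 0 ≤ u w)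
    (hu : ∀ w ∉ E, ∃ t ≤ κ * u w, HasSum (fun z => a z * u (w + z)) t) (w : G) : 0 ≤ u w := by
  set m := ⨅ v, u v
  have hm : ∀ v, m ≤ u v := ciInf_le hbdd
  refine le_trans ?_ (hm w)
  by_contra! hneg
  have ha0 := ha.apply_zero_nonpos
  have hden : 0 < κ - a 0 := by linarith
  have contraction : ∀ v, -a 0 * m / (κ - a 0) ≤ u v := by
    intro v
    rw [div_le_iff₀ hden]
    by_cases hv : v ∈ E
    · nlinarith [hE v hv]
    obtain ⟨t, ht, hsum⟩ := hu v hv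
    have hshift : HasSum (fun z => a z * (u (v + z) - m)) t := by
      simpa [mul_sub] using hsum.sub (ha.hasSum.mul_right m)
    have := le_hasSum hshift 0 fun z hz => mul_nonneg (ha.nonneg z hz) (sub_nonneg.mpr (hm _))
    rw [add_zero] at this
    linarith
  have : -a 0 * m / (κ - a 0) ≤ m := le_ciInf contraction
  rw [div_le_iff₀ hden] at this
  nlinarith

end IsJumpRate

/-- The frequency domain `[-π,π]^d`. -/
abbrev frequencyCube (d : ℕ) : Set (Fin d → ℝ) :=
  Set.Icc (fun _ => -π) (fun _ => π)

/-- The pairing `⟨z, θ⟩` of a lattice point with a frequency, additive in `z`. -/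
noncomputable def latticePairing {d : ℕ} (θ : Fin d → ℝ) : (Fin d → ℤ) →+ ℝ where
  toFun z := ∑ i, (z i : ℝ) * θ i
  map_zero' := by simp
  map_add' x y := by simp [add_mul, Finset.sum_add_distrib]

section Characters

variable {d : ℕ}

lemma latticePairing_apply (θ : Fin d → ℝ) (z : Fin d → ℤ) :
    latticePairing θ z = ∑ i, (z i : ℝ) * θ i :=
  rfl

@[fun_prop]
lemma continuous_latticePairing (z : Fin d → ℤ) : Continuous fun θ => latticePairing θ z := by
  simp only [latticePairing_apply]
  fun_prop

lemma integral_exp_int_mul_I (n : ℤ) :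
    ∫ t in Set.Icc (-π) π, Complex.exp ((n * t : ℝ) * Complex.I) =
      if n = 0 then (2 * π : ℂ) else 0 := by
  rw [integral_Icc_eq_integral_Ioc, ← intervalIntegral.integral_of_le (by linarith [pi_pos])]
  split_ifs with hn
  · simp [hn, two_mul]
  have hc : (n : ℂ) * Complex.I ≠ 0 := by simp [hn]
  have hper : Complex.exp (n * Complex.I * (π : ℝ)) = Complex.exp (n * Complex.I * (-π : ℝ)) :=
    Complex.exp_eq_exp_iff_exists_int.mpr ⟨n, by push_cast; ring⟩
  calc ∫ t in -π..π, Complex.exp ((n * t : ℝ) * Complex.I)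
      = ∫ t in -π..π, Complex.exp (n * Complex.I * t) := by
        congr! 3 with t
        push_cast
        ring
    _ = 0 := by rw [integral_exp_mul_complex hc, hper, sub_self, zero_div]

lemma integral_exp_latticePairing (z : Fin d → ℤ) :
    ∫ θ in frequencyCube d, Complex.exp (latticePairing θ z * Complex.I) =
      if z = 0 then (2 * π : ℂ) ^ d else 0 := by
  have hexp : ∀ θ : Fin d → ℝ, Complex.exp (latticePairing θ z * Complex.I) =
      ∏ i, Complex.exp ((z i * θ i : ℝ) * Complex.I) := fun θ => by
    rw [← Complex.exp_sum, ← Finset.sum_mul, latticePairing_apply, Complex.ofReal_sum]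
  simp only [hexp]
  rw [frequencyCube, ← Set.pi_univ_Icc, volume_pi, Measure.restrict_pi_pi,
    integral_fintype_prod_eq_prod (f := fun i t => Complex.exp ((z i * t : ℝ) * Complex.I))]
  simp_rw [integral_exp_int_mul_I, Finset.prod_ite_zero]
  simp [funext_iff]

lemma integral_cos_latticePairing (z : Fin d → ℤ) :
    ∫ θ in frequencyCube d, Real.cos (latticePairing θ z) = if z = 0 then (2 * π) ^ d else 0 := by
  have hint : IntegrableOn (fun θ => Complex.exp (latticePairing θ z * Complex.I))
      (frequencyCube d) := Continuous.integrableOn_Icc (by fun_prop)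
  have h := integral_re hint
  simp only [RCLike.re_eq_complex_re, Complex.exp_ofReal_mul_I_re, integral_exp_latticePairing] at h
  rw [h]
  split_ifs <;> norm_cast

end Characters

lemma norm_mul_cos_le_s18 (a x : ℝ) : ‖a * Real.cos x‖ ≤ ‖a‖ := by
  rw [norm_mul]
  exact mul_le_of_le_one_right (norm_nonneg _) (Real.abs_cos_le_one _)

lemma one_sub_cos_add_le_s18 (s t : ℝ) :
    1 - Real.cos (s + t) ≤ 2 * (1 - Real.cos s) + 2 * (1 - Real.cos t) := by
  -- The parallelogram law for `exp (i s) - 1` and `exp (-i t) - 1`.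
  rw [Real.cos_add]
  linarith [sq_nonneg (Real.cos s + Real.cos t - 2), sq_nonneg (Real.sin s - Real.sin t),
    Real.sin_sq_add_cos_sq s, Real.sin_sq_add_cos_sq t]

namespace IsJumpRate

section Symbol

variable {d : ℕ} {a : (Fin d → ℤ) → ℝ}

lemma hasSum_mul_cos (ha : IsJumpRate a) (θ : Fin d → ℝ) :
    HasSum (fun z => a z * Real.cos (latticePairing θ z)) (phiSymb d a θ) :=
  (Summable.of_norm_bounded ha.hasSum.summable.norm fun _ => norm_mul_cos_le_s18 _ _).hasSum

lemma hasSum_mul_cos_add (ha : IsJumpRate a) (heven : Function.Even a) (w : Fin d → ℤ)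
    (θ : Fin d → ℝ) :
    HasSum (fun z => a z * Real.cos (latticePairing θ (w + z)))
      (phiSymb d a θ * Real.cos (latticePairing θ w)) := by
  have hS : HasSum (fun z => a z * Real.cos (latticePairing θ (w + z))) _ :=
    (Summable.of_norm_bounded ha.hasSum.summable.norm fun _ => norm_mul_cos_le_s18 _ _).hasSum
  have hS' := (Equiv.neg (Fin d → ℤ)).hasSum_iff.mpr hS
  have htwo := (ha.hasSum_mul_cos θ).mul_left (2 * Real.cos (latticePairing θ w))
  have := (hS.add hS').unique <| htwo.congr_fun fun z => by
    simp only [Function.comp_apply, Equiv.neg_apply, heven z, map_add, map_neg, Real.cos_add,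
      Real.cos_neg, Real.sin_neg]
    ring
  convert hS using 1
  linarith

lemma hasSum_mul_one_sub_cos (ha : IsJumpRate a) (θ : Fin d → ℝ) :
    HasSum (fun z => a z * (1 - Real.cos (latticePairing θ z))) (-phiSymb d a θ) := by
  simpa [mul_sub] using ha.hasSum.sub (ha.hasSum_mul_cos θ)

lemma mul_one_sub_cos_nonneg (ha : IsJumpRate a) (θ : Fin d → ℝ) (z : Fin d → ℤ) :
    0 ≤ a z * (1 - Real.cos (latticePairing θ z)) := by
  rcases eq_or_ne z 0 with rfl | hz
  · simp
  · exact mul_nonneg (ha.nonneg z hz) (sub_nonneg.mpr (Real.cos_le_one _))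

lemma phiSymb_nonpos (ha : IsJumpRate a) (θ : Fin d → ℝ) : phiSymb d a θ ≤ 0 :=
  neg_nonneg.mp <| (ha.hasSum_mul_one_sub_cos θ).nonneg (ha.mul_one_sub_cos_nonneg θ)

lemma continuous_phiSymb (ha : IsJumpRate a) : Continuous (phiSymb d a) :=
  continuous_tsum (fun z => by fun_prop) ha.hasSum.summable.norm fun _ _ => norm_mul_cos_le_s18 _ _

lemma exists_one_sub_cos_le (ha : IsJumpRate a) (hirr : AddSubgroup.closure {z | 0 < a z} = ⊤)
    (x : Fin d → ℤ) :
    ∃ C, 0 ≤ C ∧ ∀ θ, 1 - Real.cos (latticePairing θ x) ≤ C * -phiSymb d a θ := by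
  have hx : x ∈ AddSubgroup.closure {z | 0 < a z} := hirr ▸ AddSubgroup.mem_top x
  induction hx using AddSubgroup.closure_induction with
  | mem z hz =>
    have hz : 0 < a z := hz
    refine ⟨(a z)⁻¹, by positivity, fun θ => ?_⟩
    rw [← div_eq_inv_mul, le_div_iff₀' hz]
    exact le_hasSum (ha.hasSum_mul_one_sub_cos θ) z fun v _ => ha.mul_one_sub_cos_nonneg θ v
  | zero => exact ⟨0, le_rfl, fun θ => by simp⟩
  | add x y _ _ hx hy =>
    obtain ⟨C, hC, hx⟩ := hx
    obtain ⟨D, hD, hy⟩ := hy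
    refine ⟨2 * C + 2 * D, by positivity, fun θ => ?_⟩
    rw [map_add]
    linarith [one_sub_cos_add_le_s18 (latticePairing θ x) (latticePairing θ y), hx θ, hy θ]
  | neg x _ hx => simpa only [map_neg, Real.cos_neg] using hx

end Symbol

end IsJumpRate

section Kernels

variable {d : ℕ} (a : (Fin d → ℤ) → ℝ) (κ : ℝ)

/-- The Green function `∫ cos⟨x,θ⟩ / (κ - φ(θ)) dθ` of the walk killed at rate `κ`, without the
factor `(2π)^{-d}`. -/
noncomputable def resolventKernel (x : Fin d → ℤ) : ℝ :=
  ∫ θ in frequencyCube d, Real.cos (latticePairing θ x) / (κ - phiSymb d a θ)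

/-- The potential kernel `∫ (1 - cos⟨x,θ⟩) / (κ - φ(θ)) dθ`, without the factor `(2π)^{-d}`. It
remains meaningful at `κ = 0`, where it is a multiple of `ρ_d` off the origin. -/
noncomputable def potentialKernel (x : Fin d → ℤ) : ℝ :=
  ∫ θ in frequencyCube d, (1 - Real.cos (latticePairing θ x)) / (κ - phiSymb d a θ)

/-- The defect of the triangle inequality for the potential kernel. At `κ = 0` in a recurrent
dimension it is a multiple of the Green function of the walk killed at the origin. -/
noncomputable def killedKernel (y w : Fin d → ℤ) : ℝ :=
  potentialKernel a κ y + potentialKernel a κ w - potentialKernel a κ (w - y)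

lemma potentialKernel_neg (x : Fin d → ℤ) : potentialKernel a κ (-x) = potentialKernel a κ x := by
  simp [potentialKernel]

lemma killedKernel_zero_right (y : Fin d → ℤ) : killedKernel a κ y 0 = 0 := by
  simp [killedKernel, potentialKernel]

lemma rhoConst_eq_mul_potentialKernel {x : Fin d → ℤ} (hx : x ≠ 0) :
    rhoConst d a x = -a 0 / (2 * π) ^ d * potentialKernel a 0 x := by
  rw [rhoConst, if_neg hx, potentialKernel]
  congr 2 with θ
  rw [zero_sub, div_neg, ← neg_div, neg_sub, latticePairing_apply]

end Kernels

namespace IsJumpRate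

section Resolvent

variable {d : ℕ} {a : (Fin d → ℤ) → ℝ} {κ : ℝ}

lemma norm_cos_div_le (ha : IsJumpRate a) (hκ : 0 < κ) (x : Fin d → ℤ) (θ : Fin d → ℝ) :
    ‖Real.cos (latticePairing θ x) / (κ - phiSymb d a θ)‖ ≤ κ⁻¹ := by
  have hφ := ha.phiSymb_nonpos θ
  rw [norm_div, Real.norm_of_nonneg (by linarith : 0 ≤ κ - phiSymb d a θ), ← one_div]
  exact div_le_div₀ zero_le_one (Real.abs_cos_le_one _) hκ (by linarith)

lemma continuous_cos_div (ha : IsJumpRate a) (hκ : 0 < κ) (x : Fin d → ℤ) :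
    Continuous fun θ => Real.cos (latticePairing θ x) / (κ - phiSymb d a θ) := by
  have := ha.continuous_phiSymb
  exact .div (by fun_prop) (by fun_prop) fun θ => by linarith [ha.phiSymb_nonpos θ]

lemma abs_resolventKernel_le (ha : IsJumpRate a) (hκ : 0 < κ) (x : Fin d → ℤ) :
    |resolventKernel a κ x| ≤ κ⁻¹ * volume.real (frequencyCube d) :=
  norm_setIntegral_le_of_norm_le_const isCompact_Icc.measure_lt_top fun θ _ =>
    ha.norm_cos_div_le hκ x θ

theorem hasSum_mul_resolventKernel (ha : IsJumpRate a) (heven : Function.Even a) (hκ : 0 < κ)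
    (w : Fin d → ℤ) :
    HasSum (fun z => a z * resolventKernel a κ (w + z))
      (κ * resolventKernel a κ w - if w = 0 then (2 * π) ^ d else 0) := by
  have hsum := hasSum_integral_of_dominated_convergence
    (μ := volume.restrict (frequencyCube d))
    (F := fun z θ => a z * (Real.cos (latticePairing θ (w + z)) / (κ - phiSymb d a θ)))
    (f := fun θ => phiSymb d a θ * Real.cos (latticePairing θ w) / (κ - phiSymb d a θ))
    (fun z _ => ‖a z‖ * κ⁻¹)
    (fun z => ((ha.continuous_cos_div hκ (w + z)).const_mul (a z)).aestronglyMeasurable)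
    (fun z => .of_forall fun θ => (norm_mul_le _ _).trans <| by
      gcongr; exact ha.norm_cos_div_le hκ _ θ)
    (.of_forall fun _ => ha.hasSum.summable.norm.mul_right _)
    continuous_const.integrableOn_Icc
    (.of_forall fun θ => by
      simpa only [mul_div_assoc] using (ha.hasSum_mul_cos_add heven w θ).div_const _)
  simp only [integral_const_mul] at hsum
  convert! hsum using 1
  rw [← integral_cos_latticePairing w, resolventKernel, ← integral_const_mul, ← integral_sub
    ((ha.continuous_cos_div hκ w).integrableOn_Icc.const_mul κ)
    (Continuous.integrableOn_Icc (by fun_prop))]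
  refine integral_congr_ae (.of_forall fun θ => ?_)
  have : κ - phiSymb d a θ ≠ 0 := by linarith [ha.phiSymb_nonpos θ]
  field_simp
  ring

lemma potentialKernel_eq (ha : IsJumpRate a) (hκ : 0 < κ) (x : Fin d → ℤ) :
    potentialKernel a κ x = resolventKernel a κ 0 - resolventKernel a κ x := by
  unfold potentialKernel resolventKernel
  rw [← integral_sub (ha.continuous_cos_div hκ 0).integrableOn_Icc
    (ha.continuous_cos_div hκ x).integrableOn_Icc]
  simp only [map_zero, Real.cos_zero, sub_div]

lemma killedKernel_eq (ha : IsJumpRate a) (hκ : 0 < κ) (y w : Fin d → ℤ) :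
    killedKernel a κ y w = resolventKernel a κ 0 - resolventKernel a κ y
      - resolventKernel a κ w + resolventKernel a κ (w - y) := by
  simp only [killedKernel, ha.potentialKernel_eq hκ]
  ring

lemma potentialKernel_nonneg (ha : IsJumpRate a) (hκ : 0 ≤ κ) (x : Fin d → ℤ) :
    0 ≤ potentialKernel a κ x :=
  integral_nonneg fun θ => div_nonneg (sub_nonneg.mpr (Real.cos_le_one _))
    (by linarith [ha.phiSymb_nonpos θ])

lemma bddBelow_range_killedKernel (ha : IsJumpRate a) (hκ : 0 < κ) (y : Fin d → ℤ) :
    BddBelow (Set.range (killedKernel a κ y)) := by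
  have hG := fun x => abs_le.mp (ha.abs_resolventKernel_le hκ x)
  refine ⟨-4 * (κ⁻¹ * volume.real (frequencyCube d)), ?_⟩
  rintro _ ⟨w, rfl⟩
  rw [ha.killedKernel_eq hκ]
  linarith [(hG 0).1, (hG y).2, (hG w).2, (hG (w - y)).1]

lemma hasSum_mul_killedKernel (ha : IsJumpRate a) (heven : Function.Even a) (hκ : 0 < κ)
    (y : Fin d → ℤ) {w : Fin d → ℤ} (hw : w ≠ 0) :
    HasSum (fun z => a z * killedKernel a κ y (w + z))
      (κ * (potentialKernel a κ w - potentialKernel a κ (w - y)) -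
        if w = y then (2 * π) ^ d else 0) := by
  have h := ((ha.hasSum.mul_right (resolventKernel a κ 0 - resolventKernel a κ y)).sub
    (ha.hasSum_mul_resolventKernel heven hκ w)).add
    (ha.hasSum_mul_resolventKernel heven hκ (w - y))
  simp only [hw, sub_eq_zero, if_false] at h
  convert! h using 1
  · ext z
    rw [ha.killedKernel_eq hκ, add_sub_right_comm]
    ring
  · rw [ha.potentialKernel_eq hκ, ha.potentialKernel_eq hκ]
    ring

theorem killedKernel_nonneg_of_pos (ha : IsJumpRate a) (heven : Function.Even a) (hκ : 0 < κ)
    (y w : Fin d → ℤ) : 0 ≤ killedKernel a κ y w := by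
  refine ha.nonneg_of_superharmonic hκ (E := {0}) (ha.bddBelow_range_killedKernel hκ y) ?_
    (fun v hv => ⟨_, ?_, ha.hasSum_mul_killedKernel heven hκ y hv⟩) w
  · rintro _ rfl
    exact (killedKernel_zero_right a κ y).ge
  · have hA := mul_nonneg hκ.le (ha.potentialKernel_nonneg hκ.le y)
    have hδ : (0 : ℝ) ≤ if v = y then (2 * π) ^ d else 0 := by positivity
    rw [killedKernel]
    linarith

end Resolvent

section ZeroKilling

variable {d : ℕ} {a : (Fin d → ℤ) → ℝ}

lemma tendsto_potentialKernel (ha : IsJumpRate a) (hirr : AddSubgroup.closure {z | 0 < a z} = ⊤)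
    (x : Fin d → ℤ) :
    Tendsto (fun κ => potentialKernel a κ x) (𝓝[>] 0) (𝓝 (potentialKernel a 0 x)) := by
  obtain ⟨C, hC, hle⟩ := ha.exists_one_sub_cos_le hirr x
  have hcos θ : 0 ≤ 1 - Real.cos (latticePairing θ x) := sub_nonneg.mpr (Real.cos_le_one _)
  refine tendsto_integral_filter_of_dominated_convergence (fun _ => C) (.of_forall fun κ => ?_) ?_
    continuous_const.integrableOn_Icc (.of_forall fun θ => ?_)
  · have := ha.continuous_phiSymb.measurable
    exact Measurable.aestronglyMeasurable (.div (by fun_prop) (by fun_prop))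
  · filter_upwards [self_mem_nhdsWithin] with κ (hκ : 0 < κ)
    refine .of_forall fun θ => ?_
    have hφ := ha.phiSymb_nonpos θ
    rw [Real.norm_of_nonneg (div_nonneg (hcos θ) (by linarith))]
    refine div_le_of_le_mul₀ (by linarith) hC ((hle θ).trans ?_)
    exact mul_le_mul_of_nonneg_left (by linarith) hC
  · by_cases hφ : phiSymb d a θ = 0
    · have hnum : 1 - Real.cos (latticePairing θ x) = 0 :=
        le_antisymm (by simpa [hφ] using hle θ) (hcos θ)
      simp [hnum]
    · have hid : Tendsto id (𝓝[>] (0 : ℝ)) (𝓝 0) := tendsto_id.mono_left nhdsWithin_le_nhds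
      exact tendsto_const_nhds.div (hid.sub_const _) (by simpa using hφ)

lemma tendsto_killedKernel (ha : IsJumpRate a) (hirr : AddSubgroup.closure {z | 0 < a z} = ⊤)
    (y w : Fin d → ℤ) :
    Tendsto (fun κ => killedKernel a κ y w) (𝓝[>] 0) (𝓝 (killedKernel a 0 y w)) :=
  ((ha.tendsto_potentialKernel hirr y).add (ha.tendsto_potentialKernel hirr w)).sub
    (ha.tendsto_potentialKernel hirr (w - y))

lemma killedKernel_nonneg (ha : IsJumpRate a) (heven : Function.Even a)
    (hirr : AddSubgroup.closure {z | 0 < a z} = ⊤) (y w : Fin d → ℤ) :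
    0 ≤ killedKernel a 0 y w :=
  ge_of_tendsto (ha.tendsto_killedKernel hirr y w) <| by
    filter_upwards [self_mem_nhdsWithin] with κ hκ
    exact ha.killedKernel_nonneg_of_pos heven hκ y w

lemma sum_mul_killedKernel_le (ha : IsJumpRate a) (heven : Function.Even a)
    (hirr : AddSubgroup.closure {z | 0 < a z} = ⊤) (y : Fin d → ℤ) {w : Fin d → ℤ} (hw : w ≠ 0)
    {F : Finset (Fin d → ℤ)} (hF : 0 ∈ F) :
    ∑ z ∈ F, a z * killedKernel a 0 y (w + z) ≤ -if w = y then (2 * π) ^ d else 0 := by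
  have hid : Tendsto id (𝓝[>] (0 : ℝ)) (𝓝 0) := tendsto_id.mono_left nhdsWithin_le_nhds
  have hleft := tendsto_finsetSum F fun z _ =>
    (ha.tendsto_killedKernel hirr y (w + z)).const_mul (a z)
  have hright := (hid.mul ((ha.tendsto_potentialKernel hirr w).sub
    (ha.tendsto_potentialKernel hirr (w - y)))).sub_const (if w = y then (2 * π) ^ d else 0)
  rw [zero_mul, zero_sub] at hright
  refine le_of_tendsto_of_tendsto hleft hright ?_
  filter_upwards [self_mem_nhdsWithin] with κ (hκ : 0 < κ)
  refine sum_le_hasSum F (fun z hz => ?_) (ha.hasSum_mul_killedKernel heven hκ y hw)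
  exact mul_nonneg (ha.nonneg z fun h => hz (h ▸ hF)) (ha.killedKernel_nonneg_of_pos heven hκ y _)

lemma killedKernel_add_eq_zero (ha : IsJumpRate a) (heven : Function.Even a)
    (hirr : AddSubgroup.closure {z | 0 < a z} = ⊤) {y w s : Fin d → ℤ} (hw : w ≠ 0)
    (hK : killedKernel a 0 y w = 0) (hs : 0 < a s) : killedKernel a 0 y (w + s) = 0 := by
  have h := ha.sum_mul_killedKernel_le heven hirr y hw (F := {0, s}) (by simp)
  rw [Finset.sum_pair (ha.ne_zero_of_pos hs).symm, add_zero, hK, mul_zero, zero_add] at h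
  have hδ : (0 : ℝ) ≤ if w = y then (2 * π) ^ d else 0 := by positivity
  refine le_antisymm ?_ (ha.killedKernel_nonneg heven hirr y _)
  exact nonpos_of_mul_nonpos_right (by linarith) hs

lemma killedKernel_self_ne_zero (ha : IsJumpRate a) (heven : Function.Even a)
    (hirr : AddSubgroup.closure {z | 0 < a z} = ⊤) {y : Fin d → ℤ} (hy : y ≠ 0) :
    killedKernel a 0 y y ≠ 0 := by
  intro hK
  have h := ha.sum_mul_killedKernel_le heven hirr y hy (F := {0}) (by simp)
  simp only [Finset.sum_singleton, add_zero, hK, mul_zero, if_true] at h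
  linarith [pow_pos two_pi_pos d]

theorem killedKernel_pos (ha : IsJumpRate a) (heven : Function.Even a)
    (hirr : AddSubgroup.closure {z | 0 < a z} = ⊤) (hd : 2 ≤ d) {y w : Fin d → ℤ} (hy : y ≠ 0)
    (hw : w ≠ 0) : 0 < killedKernel a 0 y w := by
  refine (ha.killedKernel_nonneg heven hirr y w).lt_of_ne' fun hK => ?_
  have := Fin.nontrivial_iff_two_le.mpr hd
  refine ha.killedKernel_self_ne_zero heven hirr hy ?_
  refine mem_of_forall_add_mem_of_ne_zero (R := {v | killedKernel a 0 y v = 0})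
    (not_isAddCyclic_pi_int (Fin d)) hirr (fun s hs => ?_)
    (fun v hv hv0 s hs => ha.killedKernel_add_eq_zero heven hirr hv0 hv hs) hK hw hy
  simpa only [Set.mem_ofPred_eq, heven s] using hs

theorem potentialKernel_lt_add (ha : IsJumpRate a) (heven : Function.Even a)
    (hirr : AddSubgroup.closure {z | 0 < a z} = ⊤) (hd : 2 ≤ d) {x y : Fin d → ℤ} (hx : x ≠ 0)
    (hxy : x ≠ y) :
    potentialKernel a 0 y < potentialKernel a 0 x + potentialKernel a 0 (y - x) := by
  have hK := ha.killedKernel_pos heven hirr hd hx (sub_ne_zero.mpr hxy)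
  rw [killedKernel, sub_sub_cancel_left, potentialKernel_neg, ← neg_sub y x,
    potentialKernel_neg] at hK
  linarith

theorem rhoConst_lt_add (ha : IsJumpRate a) (heven : Function.Even a)
    (hirr : AddSubgroup.closure {z | 0 < a z} = ⊤) (hd : 2 ≤ d) {x y : Fin d → ℤ} (hx : x ≠ 0)
    (hy : y ≠ 0) (hxy : x ≠ y) : rhoConst d a y < rhoConst d a x + rhoConst d a (y - x) := by
  have : Nontrivial (Fin d → ℤ) := ⟨x, 0, hx⟩
  have hc : 0 < -a 0 / (2 * π) ^ d := div_pos (neg_pos.mpr (ha.apply_zero_neg hirr)) (by positivity)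
  rw [rhoConst_eq_mul_potentialKernel a hx, rhoConst_eq_mul_potentialKernel a hy,
    rhoConst_eq_mul_potentialKernel a (sub_ne_zero.mpr hxy.symm), ← mul_add]
  exact mul_lt_mul_of_pos_left (ha.potentialKernel_lt_add heven hirr hd hx hxy) hc

end ZeroKilling

end IsJumpRate

section Hessian

variable {d : ℕ} {a : (Fin d → ℤ) → ℝ}

lemma summable_mul_coord_mul_coord
    (hvar : Summable fun z : Fin d → ℤ => (∑ i, (z i : ℝ) ^ 2) * a z) (i j : Fin d) :
    Summable fun z : Fin d → ℤ => a z * (z i : ℝ) * (z j : ℝ) := by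
  refine Summable.of_norm_bounded hvar.norm fun z => ?_
  have hcoord : ∀ k, (z k : ℝ) ^ 2 ≤ ∑ l, (z l : ℝ) ^ 2 := fun k =>
    Finset.single_le_sum (f := fun l => (z l : ℝ) ^ 2) (fun _ _ => sq_nonneg _) (Finset.mem_univ k)
  have hprod : |(z i : ℝ) * z j| ≤ ∑ l, (z l : ℝ) ^ 2 := by
    rw [abs_le]
    constructor <;> nlinarith [hcoord i, hcoord j, sq_nonneg ((z i : ℝ) - z j),
      sq_nonneg ((z i : ℝ) + z j)]
  calc ‖a z * z i * z j‖ = |(z i : ℝ) * z j| * ‖a z‖ := by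
        rw [mul_assoc, norm_mul, mul_comm, Real.norm_eq_abs (_ * _)]
    _ ≤ ‖∑ l, (z l : ℝ) ^ 2‖ * ‖a z‖ := by gcongr; exact hprod.trans (le_abs_self _)
    _ = ‖(∑ l, (z l : ℝ) ^ 2) * a z‖ := (norm_mul _ _).symm

lemma hasSum_mul_latticePairing_sq
    (hvar : Summable fun z : Fin d → ℤ => (∑ i, (z i : ℝ) ^ 2) * a z) (v : Fin d → ℝ) :
    HasSum (fun z => a z * latticePairing v z ^ 2) (-(v ⬝ᵥ (hessPhi d a).mulVec v)) := by
  have h : HasSum (fun z : Fin d → ℤ => ∑ i, ∑ j, a z * (z i : ℝ) * (z j : ℝ) * (v i * v j))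
      (∑ i, ∑ j, -hessPhi d a i j * (v i * v j)) :=
    hasSum_sum fun i _ => hasSum_sum fun j _ => HasSum.mul_right _ <| by
      simpa [hessPhi] using (summable_mul_coord_mul_coord hvar i j).hasSum
  convert h using 1
  · ext z
    rw [latticePairing_apply, sq, Finset.sum_mul_sum, Finset.mul_sum]
    simp only [Finset.mul_sum]
    congr! 2
    ring
  · simp only [Matrix.mulVec, dotProduct, Finset.mul_sum, ← Finset.sum_neg_distrib]
    congr! 2
    ring

namespace IsJumpRate

lemma dotProduct_hessPhi_mulVec_neg (ha : IsJumpRate a)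
    (hvar : Summable fun z : Fin d → ℤ => (∑ i, (z i : ℝ) ^ 2) * a z)
    (hirr : AddSubgroup.closure {z | 0 < a z} = ⊤) {v : Fin d → ℝ} (hv : v ≠ 0) :
    v ⬝ᵥ (hessPhi d a).mulVec v < 0 := by
  have hnonneg : ∀ z, 0 ≤ a z * latticePairing v z ^ 2 := fun z => by
    rcases eq_or_ne z 0 with rfl | hz
    · simp
    · exact mul_nonneg (ha.nonneg z hz) (sq_nonneg _)
  have hsum := hasSum_mul_latticePairing_sq hvar v
  refine (neg_nonneg.mp (hsum.nonneg hnonneg)).lt_of_ne fun h0 => hv ?_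
  rw [h0, neg_zero, hasSum_zero_iff_of_nonneg hnonneg] at hsum
  have hzero : latticePairing v = 0 := AddMonoidHom.eq_of_eqOn_dense hirr fun z (hz : 0 < a z) => by
    simpa [hz.ne'] using congrFun hsum z
  ext i
  simpa [latticePairing_apply, Pi.single_apply] using DFunLike.congr_fun hzero (Pi.single i 1)

lemma det_hessPhi_ne_zero (ha : IsJumpRate a)
    (hvar : Summable fun z : Fin d → ℤ => (∑ i, (z i : ℝ) ^ 2) * a z)
    (hirr : AddSubgroup.closure {z | 0 < a z} = ⊤) : (hessPhi d a).det ≠ 0 := by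
  intro hdet
  obtain ⟨v, hv, hHv⟩ := Matrix.exists_mulVec_eq_zero_iff.mpr hdet
  have := ha.dotProduct_hessPhi_mulVec_neg hvar hirr hv
  simp [hHv] at this

lemma gammaConst_pos (ha : IsJumpRate a)
    (hvar : Summable fun z : Fin d → ℤ => (∑ i, (z i : ℝ) ^ 2) * a z)
    (hirr : AddSubgroup.closure {z | 0 < a z} = ⊤) : 0 < gammaConst d a := by
  have hdet := abs_pos.mpr (ha.det_hessPhi_ne_zero hvar hirr)
  unfold gammaConst
  positivity

end IsJumpRate

end Hessian

theorem rho_strict_triangle_d2_general {d : ℕ} (hd : 2 ≤ d) {a : (Fin d → ℤ) → ℝ}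
    (ha : IsJumpRate a) (heven : Function.Even a) (hirr : AddSubgroup.closure {z | 0 < a z} = ⊤)
    {x y : Fin d → ℤ} (hx : x ≠ 0) (hy : y ≠ 0) (hxy : x ≠ y) :
    rhoConst d a y < rhoConst d a x + rhoConst d a (y - x) ∧
    ((Summable fun z : Fin d → ℤ => (∑ i, (z i : ℝ) ^ 2) * a z) →
      0 < (rhoConst d a (y - x) + rhoConst d a x - rhoConst d a y) /
        (4 * -a 0 * gammaConst d a)) := by
  have hlt := ha.rhoConst_lt_add heven hirr hd hx hy hxy
  have : Nontrivial (Fin d → ℤ) := ⟨x, 0, hx⟩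
  have ha0 := ha.apply_zero_neg hirr
  refine ⟨hlt, fun hvar => div_pos (by linarith) ?_⟩
  exact mul_pos (by linarith) (ha.gammaConst_pos hvar hirr)

/-- For `d = 2` and `x, y ≠ 0`, `x ≠ y`: the strict triangle inequality
`ρ₂(x) + ρ₂(y-x) > ρ₂(y)` holds, so that `C₂(x,y) > 0`. -/
theorem rho_strict_triangle_d2
    (a : (Fin 2 → ℤ) → ℝ)
    (hpos : ∀ z : Fin 2 → ℤ, z ≠ 0 → 0 ≤ a z)
    (hneg : a 0 < 0)
    (hsymm : ∀ z : Fin 2 → ℤ, a (-z) = a z)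
    (hsum : HasSum a 0)
    (hvar : Summable fun z : Fin 2 → ℤ => (∑ i, ((z i : ℝ)) ^ 2) * a z)
    (hirr : AddSubgroup.closure {z : Fin 2 → ℤ | 0 < a z} = ⊤)
    (x y : Fin 2 → ℤ) (hy : y ≠ 0) (hx : x ≠ 0) (hxy : x ≠ y) :
    rhoConst 2 a y < rhoConst 2 a x + rhoConst 2 a (y - x) ∧
    0 < (rhoConst 2 a (y - x) + rhoConst 2 a x - rhoConst 2 a y) /
        (4 * (-(a 0)) * gammaConst 2 a) :=
  (rho_strict_triangle_d2_general le_rfl ⟨hpos, hsum⟩ hsymm hirr hx hy hxy).imp_right (· hvar)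
end
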